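/- Let F : ℝ → ℝ be real analytic on all of ℝ, and suppose there is a nonempty open set U ⊆ ℝ such that 2·F(x) = x·F'(x) for every x ∈ U. Then there exists a constant c ∈ ℝ (namely c = F(1)) such that F(x) = c·x² for every x ∈ ℝ. -/

import Mathlib

/-- If `F : ℝ → ℝ` is real analytic on all of `ℝ` and its scaling excess
`2F(x) − x·F'(x)` vanishes on a nonempty open set `U`, then `F(x) = c·x²`
for all `x`, with `c = F(1)`. -/
theorem analytic_euler_on_open_set_implies_quadratic (F : ℝ → ℝ)
    (hF : AnalyticOnNhd ℝ F Set.univ)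
    (U : Set ℝ) (hU : IsOpen U) (hUne : U.Nonempty)
    (hEuler : ∀ x ∈ U, 2 * F x = x * deriv F x) :
    ∃ c : ℝ, c = F 1 ∧ ∀ x : ℝ, F x = c * x ^ 2 := by
  obtain ⟨z, hz⟩ := hUne
  have hE : (fun x => 2 * F x) = fun x => x * deriv F x := by
    refine AnalyticOnNhd.eq_of_eventuallyEq (𝕜 := ℝ) (z₀ := z) ?_ ?_ ?_
    · exact fun x hx => analyticAt_const.mul (hF x hx)
    · exact fun x hx => analyticAt_id.mul (hF.deriv x hx)
    · filter_upwards [hU.mem_nhds hz] with x hx using hEuler x hx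
  have hd : ∀ x ∈ Set.Ioi (0 : ℝ), HasDerivAt (fun y => F y / y ^ 2) 0 x := by
    intro x hx
    have hx0 : x ≠ 0 := ne_of_gt hx
    have h1 := (hF x trivial).differentiableAt.hasDerivAt
    have h2 := h1.div (hasDerivAt_pow 2 x) (pow_ne_zero 2 hx0)
    have h3 : 2 * F x = x * deriv F x := congrFun hE x
    refine h2.congr_deriv ?_
    rw [div_eq_zero_iff]
    left
    norm_num
    linear_combination -x * h3
  have hc : ∀ x ∈ Set.Ioi (0 : ℝ), F x / x ^ 2 = F 1 / 1 ^ 2 := by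
    intro x hx
    exact isOpen_Ioi.is_const_of_deriv_eq_zero isPreconnected_Ioi
      (fun y hy => (hd y hy).differentiableAt.differentiableWithinAt)
      (fun y hy => (hd y hy).deriv) hx (Set.mem_Ioi.2 one_pos)
  have hfin : F = fun x => F 1 * x ^ 2 := by
    refine AnalyticOnNhd.eq_of_eventuallyEq (𝕜 := ℝ) (z₀ := 1) hF ?_ ?_
    · exact fun x _ => analyticAt_const.mul (analyticAt_id.pow 2)
    · filter_upwards [isOpen_Ioi.mem_nhds (Set.mem_Ioi.2 (one_pos (α := ℝ)))] with x hx
      have hx0 : x ≠ 0 := ne_of_gt hx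
      have := hc x hx
      rw [div_eq_iff (pow_ne_zero 2 hx0)] at this
      simpa using this
  exact ⟨F 1, rfl, fun x => congrFun hfin x⟩
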